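/- Let ρ ≥ 0, δ < 1, and a_j ∈ S^{m_j}_{ρ,δ}(ℝ^d×ℝ^d), j = 1,2, with a_j(x,ξ) = 0 for x outside a fixed compact set. Define h(x,ξ) = (2π)^{−d} ∫_{ℝ^d} ( ∫_{ℝ^d} a₁(y,ξ) conj(a₂(y,ξ+ζ)) e^{i⟨x−y,ζ⟩} dy ) dζ as an iterated integral. Then h is a well-defined smooth function, and for all multi-indices α, β there exist n = n(α,β) and C = C(α,β) such that |∂_ξ^α ∂_x^β h(x,ξ)| ≤ C(1+|ξ|)^n for all x, ξ ∈ ℝ^d. -/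

import Mathlib

open MeasureTheory Filter Topology

noncomputable section

/-- Dot product on `ℝ^d`. -/
def dotp {d : ℕ} (x ξ : Fin d → ℝ) : ℝ := ∑ i, x i * ξ i

/-- Directional derivative of a function between normed spaces. -/
def dirDeriv {E F : Type*} [NormedAddCommGroup E] [NormedSpace ℝ E]
    [NormedAddCommGroup F] [NormedSpace ℝ F] (v : E) (f : E → F) : E → F :=
  fun x => fderiv ℝ f x v

/-- Iterated directional derivatives along a list of directions. -/
def dirDerivList {E F : Type*} [NormedAddCommGroup E] [NormedSpace ℝ E]
    [NormedAddCommGroup F] [NormedSpace ℝ F] : List E → (E → F) → E → F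
  | [], f => f
  | v :: l, f => dirDeriv v (dirDerivList l f)

/-- Multi-index partial derivative `∂^α` with respect to a family of directions. -/
def mpderivB {n : ℕ} {E F : Type*} [NormedAddCommGroup E] [NormedSpace ℝ E]
    [NormedAddCommGroup F] [NormedSpace ℝ F] (b : Fin n → E) (α : Fin n → ℕ)
    (f : E → F) : E → F :=
  dirDerivList ((List.finRange n).flatMap fun i => List.replicate (α i) (b i)) f

/-- Multi-index partial derivative `∂^α` on `ℝ^d`. -/
def mpderiv {d : ℕ} {F : Type*} [NormedAddCommGroup F] [NormedSpace ℝ F]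
    (α : Fin d → ℕ) (f : (Fin d → ℝ) → F) : (Fin d → ℝ) → F :=
  mpderivB (fun i => Pi.single i 1) α f

/-- Order `|α|` of a multi-index. -/
def mOrder {d : ℕ} (α : Fin d → ℕ) : ℕ := ∑ i, α i

/-- Factorial `α!` of a multi-index. -/
def mFactorial {d : ℕ} (α : Fin d → ℕ) : ℕ := ∏ i, (α i).factorial

/-- Power `ζ^α`. -/
def mpow {d : ℕ} (ζ : Fin d → ℝ) (α : Fin d → ℕ) : ℝ := ∏ i, ζ i ^ α i

/-- The finset of multi-indices of order `< N`. -/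
def mIdxLt (d N : ℕ) : Finset (Fin d → ℕ) :=
  (Fintype.piFinset fun _ : Fin d => Finset.range N).filter fun α => mOrder α < N

/-- The finset of multi-indices of order `= N`. -/
def mIdxEq (d N : ℕ) : Finset (Fin d → ℕ) :=
  (Fintype.piFinset fun _ : Fin d => Finset.range (N + 1)).filter fun α => mOrder α = N

/-- Hörmander symbol class `S^m_{ρ,δ}(X × ℝ^d)`. -/
def IsSymbol {d : ℕ} (X : Set (Fin d → ℝ)) (m ρ δ : ℝ)
    (a : (Fin d → ℝ) → (Fin d → ℝ) → ℂ) : Prop :=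
  ContDiffOn ℝ (⊤ : ℕ∞) (fun q : (Fin d → ℝ) × (Fin d → ℝ) => a q.1 q.2) (X ×ˢ Set.univ) ∧
  ∀ (α β : Fin d → ℕ) (K : Set (Fin d → ℝ)), IsCompact K → K ⊆ X →
    ∃ C : ℝ, ∀ x ∈ K, ∀ ξ : Fin d → ℝ,
      ‖mpderiv β (fun y => mpderiv α (fun η => a y η) ξ) x‖ ≤
        C * (1 + ‖ξ‖) ^ (m - ρ * (mOrder α : ℝ) + δ * (mOrder β : ℝ))

/-- Hörmander amplitude class `S^m_{ρ,δ,δ}(X × X × ℝ^d)`. -/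
def IsAmplitude {d : ℕ} (X : Set (Fin d → ℝ)) (m ρ δ : ℝ)
    (a : (Fin d → ℝ) → (Fin d → ℝ) → (Fin d → ℝ) → ℂ) : Prop :=
  ContDiffOn ℝ (⊤ : ℕ∞)
    (fun q : ((Fin d → ℝ) × (Fin d → ℝ)) × (Fin d → ℝ) => a q.1.1 q.1.2 q.2)
    ((X ×ˢ X) ×ˢ Set.univ) ∧
  ∀ (α β β' : Fin d → ℕ) (K : Set (Fin d → ℝ)), IsCompact K → K ⊆ X →
    ∃ C : ℝ, ∀ x ∈ K, ∀ x' ∈ K, ∀ ξ : Fin d → ℝ,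
      ‖mpderiv β (fun y => mpderiv β' (fun y' => mpderiv α (fun η => a y y' η) ξ) x') x‖ ≤
        C * (1 + ‖ξ‖) ^ (m - ρ * (mOrder α : ℝ) + δ * ((mOrder β : ℝ) + (mOrder β' : ℝ)))

/-- `C₀^∞(X)` test functions. -/
def IsTestFun {d : ℕ} (X : Set (Fin d → ℝ)) (u : (Fin d → ℝ) → ℂ) : Prop :=
  ContDiff ℝ (⊤ : ℕ∞) u ∧ HasCompactSupport u ∧ tsupport u ⊆ X

/-- Fourier transform `(2π)^{-d/2} ∫ e^{-i⟨x,ξ⟩} u(x) dx`. -/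
def fourierHat {d : ℕ} (u : (Fin d → ℝ) → ℂ) (ξ : Fin d → ℝ) : ℂ :=
  (((2 * Real.pi) ^ (-(d : ℝ) / 2) : ℝ) : ℂ) *
    ∫ x : Fin d → ℝ, Complex.exp (-(Complex.I * (dotp x ξ : ℂ))) * u x

/-- Pseudo-differential operator with symbol `a`. -/
def Op {d : ℕ} (a : (Fin d → ℝ) → (Fin d → ℝ) → ℂ) (u : (Fin d → ℝ) → ℂ) :
    (Fin d → ℝ) → ℂ := fun x =>
  (((2 * Real.pi) ^ (-(d : ℝ) / 2) : ℝ) : ℂ) *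
    ∫ ξ : Fin d → ℝ, Complex.exp (Complex.I * (dotp x ξ : ℂ)) * a x ξ * fourierHat u ξ

/-- Pseudo-differential operator with amplitude `a` (iterated integral). -/
def OpAmp {d : ℕ} (a : (Fin d → ℝ) → (Fin d → ℝ) → (Fin d → ℝ) → ℂ)
    (u : (Fin d → ℝ) → ℂ) : (Fin d → ℝ) → ℂ := fun x =>
  (((2 * Real.pi) ^ (-(d : ℝ)) : ℝ) : ℂ) *
    ∫ ξ : Fin d → ℝ, ∫ x' : Fin d → ℝ,
      Complex.exp (Complex.I * (dotp (x - x') ξ : ℂ)) * a x x' ξ * u x'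

/-- The formal adjoint `A*` of the PDO with symbol `a`. -/
def OpAdj {d : ℕ} (a : (Fin d → ℝ) → (Fin d → ℝ) → ℂ) (u : (Fin d → ℝ) → ℂ) :
    (Fin d → ℝ) → ℂ := fun x =>
  (((2 * Real.pi) ^ (-(d : ℝ)) : ℝ) : ℂ) *
    ∫ ξ : Fin d → ℝ, ∫ x' : Fin d → ℝ,
      Complex.exp (Complex.I * (dotp (x - x') ξ : ℂ)) * (starRingEnd ℂ) (a x' ξ) * u x'

/-- Gradient of a real-valued function on `ℝ^d`. -/
def gradR {d : ℕ} (f : (Fin d → ℝ) → ℝ) (x : Fin d → ℝ) : Fin d → ℝ :=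
  fun i => fderiv ℝ f x (Pi.single i 1)

end

/-!
For fixed `ζ` and `(x, ξ)`, each integration by parts in `y` gains a factor `|ζ|⁻¹`, while the
`y`-derivative falling on `conj (a₂ (y, ξ + ζ))` costs at most `|ζ|^δ` with `δ < 1`. Hence the inner
integral decays faster than any power of `ζ`, with polynomial growth in `ξ` by Peetre's inequality.
Differentiating under both integrals only replaces the amplitude by another one of the same class:
an `x`-derivative multiplies it by a coordinate of `ζ`, and a `ξ`-derivative changes its order in
`ζ` by a fixed amount, neither of which affects the rapid decay.
-/

open scoped ContDiff

section DirectionalDerivatives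

variable {E E' F F' : Type*} [NormedAddCommGroup E] [NormedSpace ℝ E]
  [NormedAddCommGroup E'] [NormedSpace ℝ E'] [NormedAddCommGroup F] [NormedSpace ℝ F]
  [NormedAddCommGroup F'] [NormedSpace ℝ F'] {f g : E → F}

lemma dirDeriv_zero (f : E → F) : dirDeriv 0 f = fun _ => 0 := by
  funext x
  simp [dirDeriv]

lemma dirDerivList_append (l₁ l₂ : List E) (f : E → F) :
    dirDerivList (l₁ ++ l₂) f = dirDerivList l₁ (dirDerivList l₂ f) := by
  induction l₁ with
  | nil => rfl
  | cons v l ih => simp only [List.cons_append, dirDerivList, ih]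

lemma contDiff_dirDeriv (hf : ContDiff ℝ ∞ f) (v : E) : ContDiff ℝ ∞ (dirDeriv v f) :=
  (hf.fderiv_right (m := ∞) (by simp)).clm_apply contDiff_const

lemma contDiff_dirDerivList (hf : ContDiff ℝ ∞ f) (l : List E) :
    ContDiff ℝ ∞ (dirDerivList l f) := by
  induction l with
  | nil => exact hf
  | cons v l ih => exact contDiff_dirDeriv ih v

lemma differentiable_dirDerivList (hf : ContDiff ℝ ∞ f) (l : List E) :
    Differentiable ℝ (dirDerivList l f) :=
  (contDiff_dirDerivList hf l).differentiable (by simp)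

lemma dirDeriv_comm (hf : ContDiff ℝ ∞ f) (v w : E) :
    dirDeriv v (dirDeriv w f) = dirDeriv w (dirDeriv v f) := by
  funext x
  have hd : DifferentiableAt ℝ (fderiv ℝ f) x :=
    (hf.fderiv_right (m := ∞) (by simp)).differentiable (by simp) x
  have hsymm : IsSymmSndFDerivAt ℝ f x := by
    apply hf.contDiffAt.isSymmSndFDerivAt
    rw [minSmoothness_of_isRCLikeNormedField]
    exact WithTop.coe_le_coe.2 le_top
  have second_deriv (v w : E) :
      dirDeriv v (dirDeriv w f) x = fderiv ℝ (fderiv ℝ f) x v w := by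
    change fderiv ℝ (fun y => fderiv ℝ f y w) x v = _
    rw [fderiv_clm_apply hd (differentiableAt_const w)]
    simp
  rw [second_deriv, second_deriv]
  exact hsymm v w

lemma dirDerivList_perm (hf : ContDiff ℝ ∞ f) {l₁ l₂ : List E} (h : l₁.Perm l₂) :
    dirDerivList l₁ f = dirDerivList l₂ f := by
  induction h with
  | nil => rfl
  | cons v _ ih => simp only [dirDerivList, ih]
  | swap v w l => exact dirDeriv_comm (contDiff_dirDerivList hf l) _ _
  | trans _ _ h₁ h₂ => rw [h₁, h₂]

lemma dirDeriv_comp_affine (hf : Differentiable ℝ f) (L : E' →L[ℝ] E) (c : E) (v : E') :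
    dirDeriv v (fun x => f (c + L x)) = fun x => dirDeriv (L v) f (c + L x) := by
  funext x
  have hd : HasFDerivAt (fun x => f (c + L x)) ((fderiv ℝ f (c + L x)).comp L) x :=
    (hf (c + L x)).hasFDerivAt.comp x (L.hasFDerivAt.const_add c)
  simp [dirDeriv, hd.fderiv]

lemma dirDerivList_comp_affine (hf : ContDiff ℝ ∞ f) (L : E' →L[ℝ] E) (c : E) (l : List E') :
    dirDerivList l (fun x => f (c + L x)) = fun x => dirDerivList (l.map L) f (c + L x) := by
  induction l with
  | nil => rfl
  | cons v l ih =>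
    simp only [dirDerivList, ih, List.map_cons]
    exact dirDeriv_comp_affine (differentiable_dirDerivList hf _) L c v

lemma dirDerivList_clm_comp (hf : ContDiff ℝ ∞ f) (L : F →L[ℝ] F') (l : List E) :
    dirDerivList l (fun x => L (f x)) = fun x => L (dirDerivList l f x) := by
  induction l with
  | nil => rfl
  | cons v l ih =>
    funext x
    have hd : HasFDerivAt (fun x => L (dirDerivList l f x)) _ x :=
      L.hasFDerivAt.comp x (differentiable_dirDerivList hf l x).hasFDerivAt
    simp only [dirDerivList, ih, dirDeriv]
    rw [hd.fderiv]
    rfl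

lemma dirDerivList_add (hf : ContDiff ℝ ∞ f) (hg : ContDiff ℝ ∞ g) (l : List E) :
    dirDerivList l (fun x => f x + g x) =
      fun x => dirDerivList l f x + dirDerivList l g x := by
  induction l with
  | nil => rfl
  | cons v l ih =>
    funext x
    simp only [dirDerivList, ih, dirDeriv]
    rw [fderiv_fun_add (differentiable_dirDerivList hf l x) (differentiable_dirDerivList hg l x)]
    rfl

lemma dirDeriv_mul {R : Type*} [NormedRing R] [NormedAlgebra ℝ R] {f g : E → R}
    (hf : Differentiable ℝ f) (hg : Differentiable ℝ g) (v : E) :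
    dirDeriv v (fun x => f x * g x) = fun x => f x * dirDeriv v g x + dirDeriv v f x * g x := by
  funext x
  simp [dirDeriv, fderiv_fun_mul' (hf x) (hg x)]

lemma dirDerivList_eq_zero_of_isOpen {U : Set E} (hU : IsOpen U) (hf : ∀ x ∈ U, f x = 0)
    (l : List E) {x : E} (hx : x ∈ U) : dirDerivList l f x = 0 := by
  induction l generalizing x with
  | nil => exact hf x hx
  | cons v l ih =>
    have hzero : dirDerivList l f =ᶠ[𝓝 x] fun _ => 0 :=
      Filter.mem_of_superset (hU.mem_nhds hx) fun y hy => ih hy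
    simp only [dirDerivList, dirDeriv]
    rw [hzero.fderiv_eq]
    simp

lemma contDiff_infty_of_differentiable_dirDerivList {ι : Type*} [Finite ι]
    (b : Module.Basis ι ℝ E)
    (hf : ∀ w : List ι, Differentiable ℝ (dirDerivList (w.map b) f)) : ContDiff ℝ ∞ f := by
  have := Fintype.ofFinite ι
  have := b.finiteDimensional_of_finite
  suffices h : ∀ (n : ℕ) (w : List ι), ContDiff ℝ n (dirDerivList (w.map b) f) from
    contDiff_infty.2 fun n => h n []
  intro n
  induction n with
  | zero => exact fun w => contDiff_zero.2 (hf w).continuous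
  | succ n ih =>
    intro w
    rw [Nat.cast_succ, contDiff_succ_iff_fderiv_apply]
    refine ⟨hf w, by simp, fun v => ?_⟩
    have expand (x : E) : fderiv ℝ (dirDerivList (w.map b) f) x v =
        ∑ i, b.repr v i • dirDerivList ((i :: w).map b) f x := by
      conv_lhs => rw [← b.sum_repr v, map_sum]
      simp only [map_smul]
      rfl
    simp only [expand]
    exact ContDiff.sum fun i _ => (ih (i :: w)).const_smul _

end DirectionalDerivatives

section ParametricIntegrals

variable {H α ι G : Type*} [NormedAddCommGroup G] [MeasurableSpace α] {μ : Measure α}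

section Domination

variable [TopologicalSpace H]

/-- A family `F q` of measurable functions which, for `q` near any given parameter, is dominated
by a single integrable function: the hypothesis under which a parameter-dependent integral may be
differentiated under the integral sign. -/
structure LocallyDominated (μ : Measure α) (F : H → α → G) : Prop where
  aestronglyMeasurable : ∀ q, AEStronglyMeasurable (F q) μ
  exists_bound : ∀ q, ∃ s ∈ 𝓝 q, ∃ g : α → ℝ, Integrable g μ ∧ ∀ q' ∈ s, ∀ a, ‖F q' a‖ ≤ g a

lemma LocallyDominated.integrable {F : H → α → G} (hF : LocallyDominated μ F) (q : H) :
    Integrable (F q) μ := by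
  obtain ⟨s, hs, g, hg, hle⟩ := hF.exists_bound q
  exact hg.mono' (hF.aestronglyMeasurable q) (.of_forall (hle q (mem_of_mem_nhds hs)))

lemma LocallyDominated.of_norm_le_mul {F : H → α → G}
    (hmeas : ∀ q, AEStronglyMeasurable (F q) μ) {φ : H → ℝ} (hφ : Continuous φ)
    {g : α → ℝ} (hg : Integrable g μ) (hle : ∀ q a, ‖F q a‖ ≤ φ q * g a) :
    LocallyDominated μ F where
  aestronglyMeasurable := hmeas
  exists_bound q := by
    refine ⟨{q' | |φ q'| < |φ q| + 1}, hφ.abs.continuousAt.eventually_lt_const (by simp),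
      fun a => (|φ q| + 1) * |g a|, hg.abs.const_mul _, fun q' hq' a => ?_⟩
    calc ‖F q' a‖ ≤ |φ q' * g a| := (hle q' a).trans (le_abs_self _)
      _ = |φ q'| * |g a| := abs_mul _ _
      _ ≤ (|φ q| + 1) * |g a| := by gcongr; exact le_of_lt hq'

end Domination

variable [NormedAddCommGroup H] [NormedSpace ℝ H] [NormedSpace ℝ G]

lemma aestronglyMeasurable_clm_of_basis [Finite ι] (b : Module.Basis ι ℝ H) {T : α → H →L[ℝ] G}
    (hT : ∀ i, AEStronglyMeasurable (fun a => T a (b i)) μ) : AEStronglyMeasurable T μ := by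
  have := Fintype.ofFinite ι
  have := b.finiteDimensional_of_finite
  let coord (i : ι) : H →L[ℝ] ℝ := (b.coord i).toContinuousLinearMap
  have expand : T = fun a => ∑ i, ContinuousLinearMap.smulRightL ℝ H G (coord i) (T a (b i)) := by
    funext a
    refine ContinuousLinearMap.ext fun v => ?_
    conv_lhs => rw [← b.sum_repr v, map_sum]
    simp [coord]
  rw [expand]
  exact Finset.aestronglyMeasurable_fun_sum _ fun i _ =>
    (ContinuousLinearMap.continuous _).comp_aestronglyMeasurable (hT i)

lemma LocallyDominated.clm_of_basis [Finite ι] (b : Module.Basis ι ℝ H) {T : H → α → H →L[ℝ] G}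
    (hT : ∀ i, LocallyDominated μ fun q a => T q a (b i)) : LocallyDominated μ T where
  aestronglyMeasurable q :=
    aestronglyMeasurable_clm_of_basis b fun i => (hT i).aestronglyMeasurable q
  exists_bound q := by
    have := Fintype.ofFinite ι
    choose s hs g hg hle using fun i => (hT i).exists_bound q
    refine ⟨⋂ i, s i, Filter.iInter_mem.2 hs,
      fun a => Fintype.card ι • ‖(b.equivFunL : H →L[ℝ] ι → ℝ)‖ * ∑ i, |g i a|,
      (integrable_finsetSum _ fun i _ => (hg i).abs).const_mul _, fun q' hq' a => ?_⟩
    refine b.opNorm_le (Finset.sum_nonneg fun i _ => abs_nonneg _) fun i => ?_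
    calc ‖T q' a (b i)‖ ≤ |g i a| := (hle i q' (Set.mem_iInter.1 hq' i) a).trans (le_abs_self _)
      _ ≤ ∑ i, |g i a| :=
        Finset.single_le_sum (f := fun i => |g i a|) (fun i _ => abs_nonneg _) (Finset.mem_univ i)

lemma hasFDerivAt_integral_of_locallyDominated {F : H → α → G}
    (hF : ∀ a, Differentiable ℝ fun q => F q a) (hdom : LocallyDominated μ F)
    (hdom' : LocallyDominated μ fun q a => fderiv ℝ (fun p => F p a) q) (q : H) :
    HasFDerivAt (fun q => ∫ a, F q a ∂μ) (∫ a, fderiv ℝ (fun p => F p a) q ∂μ) q := by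
  obtain ⟨s, hs, g, hg, hle⟩ := hdom'.exists_bound q
  exact hasFDerivAt_integral_of_dominated_of_fderiv_le hs
    (.of_forall hdom.aestronglyMeasurable) (hdom.integrable q)
    (hdom'.aestronglyMeasurable q) (.of_forall fun a q' hq' => hle q' hq' a) hg
    (.of_forall fun a q' _ => (hF a q').hasFDerivAt)

section Smooth

variable [Finite ι] (b : Module.Basis ι ℝ H) {F : H → α → G}

lemma hasFDerivAt_integral_dirDerivList
    (hF : ∀ a, ContDiff ℝ ∞ fun q => F q a)
    (hdom : ∀ w : List ι,
      LocallyDominated μ fun q a => dirDerivList (w.map b) (fun p => F p a) q)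
    (w : List ι) (q : H) :
    HasFDerivAt (fun q => ∫ a, dirDerivList (w.map b) (fun p => F p a) q ∂μ)
      (∫ a, fderiv ℝ (dirDerivList (w.map b) fun p => F p a) q ∂μ) q :=
  hasFDerivAt_integral_of_locallyDominated
    (fun a => differentiable_dirDerivList (hF a) _) (hdom w)
    (.clm_of_basis b fun i => hdom (i :: w)) q

lemma dirDerivList_integral
    (hF : ∀ a, ContDiff ℝ ∞ fun q => F q a)
    (hdom : ∀ w : List ι,
      LocallyDominated μ fun q a => dirDerivList (w.map b) (fun p => F p a) q)
    (w : List ι) :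
    dirDerivList (w.map b) (fun q => ∫ a, F q a ∂μ) =
      fun q => ∫ a, dirDerivList (w.map b) (fun p => F p a) q ∂μ := by
  induction w with
  | nil => rfl
  | cons i w ih =>
    funext q
    have hdom' : LocallyDominated μ
        fun q a => fderiv ℝ (dirDerivList (w.map b) fun p => F p a) q :=
      .clm_of_basis b fun i => hdom (i :: w)
    simp only [List.map_cons, dirDerivList, ih, dirDeriv]
    rw [(hasFDerivAt_integral_dirDerivList b hF hdom w q).fderiv,
      ContinuousLinearMap.integral_apply (hdom'.integrable q)]

lemma contDiff_integral_of_locallyDominated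
    (hF : ∀ a, ContDiff ℝ ∞ fun q => F q a)
    (hdom : ∀ w : List ι,
      LocallyDominated μ fun q a => dirDerivList (w.map b) (fun p => F p a) q) :
    ContDiff ℝ ∞ fun q => ∫ a, F q a ∂μ := by
  refine contDiff_infty_of_differentiable_dirDerivList b fun w => ?_
  rw [dirDerivList_integral b hF hdom]
  exact fun q => (hasFDerivAt_integral_dirDerivList b hF hdom w q).differentiableAt

end Smooth

end ParametricIntegrals

section Words

variable {d : ℕ} {G : Type*} [NormedAddCommGroup G] [NormedSpace ℝ G]

/-- The space of pairs `(x, ξ)`. -/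
abbrev PhaseSpace (d : ℕ) : Type := (Fin d → ℝ) × (Fin d → ℝ)

/-- The standard basis of phase space: `Sum.inl j` is the direction `x_j` and `Sum.inr j` the
direction `ξ_j`. Lists of indices ("words") encode the iterated partial derivatives. -/
noncomputable def phaseBasis (d : ℕ) : Module.Basis (Fin d ⊕ Fin d) ℝ (PhaseSpace d) :=
  (Pi.basisFun ℝ (Fin d)).prod (Pi.basisFun ℝ (Fin d))

@[simp]
lemma phaseBasis_inl (j : Fin d) : phaseBasis d (.inl j) = (Pi.single j 1, 0) := by
  simp [phaseBasis]

@[simp]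
lemma phaseBasis_inr (j : Fin d) : phaseBasis d (.inr j) = (0, Pi.single j 1) := by
  simp [phaseBasis]

/-- The iterated partial derivative `∂_w f` along a word `w` in the standard directions of phase
space. -/
noncomputable def wordDeriv (w : List (Fin d ⊕ Fin d)) (f : PhaseSpace d → G) :
    PhaseSpace d → G :=
  dirDerivList (w.map (phaseBasis d)) f

lemma wordDeriv_cons (i : Fin d ⊕ Fin d) (w : List (Fin d ⊕ Fin d)) (f : PhaseSpace d → G) :
    wordDeriv (i :: w) f = dirDeriv (phaseBasis d i) (wordDeriv w f) :=
  rfl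

lemma wordDeriv_append_singleton (w : List (Fin d ⊕ Fin d)) (i : Fin d ⊕ Fin d)
    (f : PhaseSpace d → G) :
    wordDeriv (w ++ [i]) f = wordDeriv w (dirDeriv (phaseBasis d i) f) := by
  simp [wordDeriv, dirDerivList_append, dirDerivList]

/-- The total cost `r |α| + δ |β|` of the mixed derivative `∂_x^β ∂_ξ^α` encoded by a word. -/
noncomputable def wordCost (r δ : ℝ) (w : List (Fin d ⊕ Fin d)) : ℝ :=
  (w.map (Sum.elim (fun _ => δ) fun _ => r)).sum

lemma wordCost_append (r δ : ℝ) (w w' : List (Fin d ⊕ Fin d)) :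
    wordCost r δ (w ++ w') = wordCost r δ w + wordCost r δ w' := by
  simp [wordCost]

lemma wordCost_perm (r δ : ℝ) {w w' : List (Fin d ⊕ Fin d)} (h : w.Perm w') :
    wordCost r δ w = wordCost r δ w' :=
  (h.map _).sum_eq

lemma wordCost_mono {r r' δ δ' : ℝ} (hr : r ≤ r') (hδ : δ ≤ δ') (w : List (Fin d ⊕ Fin d)) :
    wordCost r δ w ≤ wordCost r' δ' w := by
  refine List.sum_le_sum fun i _ => ?_
  cases i <;> simpa

/-- The word of the partial derivative `∂^α`. -/
def multiIndexWord (α : Fin d → ℕ) : List (Fin d) :=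
  (List.finRange d).flatMap fun i => List.replicate (α i) i

lemma length_multiIndexWord (α : Fin d → ℕ) : (multiIndexWord α).length = mOrder α := by
  simp [multiIndexWord, mOrder, List.length_flatMap, ← List.ofFn_eq_map, List.sum_ofFn]

lemma perm_multiIndexWord_count (l : List (Fin d)) :
    l.Perm (multiIndexWord fun i => l.count i) := by
  refine List.perm_iff_count.2 fun j => ?_
  simp [multiIndexWord, List.count_flatMap, List.count_replicate, Function.comp_def,
    ← List.ofFn_eq_map, List.sum_ofFn]

/-- The word of the mixed partial derivative `∂_x^β ∂_ξ^α`. -/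
def mixedWord (α β : Fin d → ℕ) : List (Fin d ⊕ Fin d) :=
  (multiIndexWord β).map .inl ++ (multiIndexWord α).map .inr

lemma wordCost_mixedWord (r δ : ℝ) (α β : Fin d → ℕ) :
    wordCost r δ (mixedWord α β) = r * mOrder α + δ * mOrder β := by
  simp [wordCost, mixedWord, Function.comp_def, length_multiIndexWord, mul_comm, add_comm]

lemma perm_map_inl_append_map_inr {ι κ : Type*} (w : List (ι ⊕ κ)) :
    w.Perm ((w.filterMap Sum.getLeft?).map .inl ++ (w.filterMap Sum.getRight?).map .inr) := by
  induction w with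
  | nil => rfl
  | cons i w ih =>
    cases i with
    | inl i => simpa [List.filterMap_cons] using ih
    | inr i => simpa [List.filterMap_cons] using (ih.cons _).trans List.perm_middle.symm

lemma exists_perm_mixedWord (w : List (Fin d ⊕ Fin d)) :
    ∃ α β : Fin d → ℕ, w.Perm (mixedWord α β) :=
  ⟨_, _, (perm_map_inl_append_map_inr w).trans <|
    ((perm_multiIndexWord_count _).map _).append ((perm_multiIndexWord_count _).map _)⟩

lemma mpderiv_eq_dirDerivList (α : Fin d → ℕ) (f : (Fin d → ℝ) → G) :
    mpderiv α f = dirDerivList ((multiIndexWord α).map fun i => Pi.single i 1) f := by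
  simp [mpderiv, mpderivB, multiIndexWord, List.map_flatMap]

lemma mpderiv_mpderiv_eq_wordDeriv {f : PhaseSpace d → G} (hf : ContDiff ℝ ∞ f)
    (α β : Fin d → ℕ) (x ξ : Fin d → ℝ) :
    mpderiv β (fun y => mpderiv α (fun η => f (y, η)) ξ) x =
      wordDeriv (mixedWord α β) f (x, ξ) := by
  have freq (y : Fin d → ℝ) : mpderiv α (fun η => f (y, η)) ξ =
      wordDeriv ((multiIndexWord α).map .inr) f (y, ξ) := by
    have := dirDerivList_comp_affine hf (.inr ℝ (Fin d → ℝ) (Fin d → ℝ)) (y, 0)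
      ((multiIndexWord α).map fun i => Pi.single i 1)
    simpa [mpderiv_eq_dirDerivList, wordDeriv, Function.comp_def] using congrFun this ξ
  have := dirDerivList_comp_affine
    (contDiff_dirDerivList hf (((multiIndexWord α).map .inr).map (phaseBasis d)))
    (.inl ℝ (Fin d → ℝ) (Fin d → ℝ)) (0, ξ) ((multiIndexWord β).map fun i => Pi.single i 1)
  simpa [freq, mpderiv_eq_dirDerivList, wordDeriv, mixedWord, Function.comp_def,
    dirDerivList_append] using congrFun this x

end Words

section PolynomialGrowth

variable {d : ℕ} {K : Set (Fin d → ℝ)} {s t : ℝ}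

lemma one_le_one_add_norm {E : Type*} [SeminormedAddCommGroup E] (x : E) : 1 ≤ 1 + ‖x‖ :=
  le_add_of_nonneg_right (norm_nonneg x)

lemma one_add_norm_add_rpow_le {E : Type*} [SeminormedAddCommGroup E] (x y : E) (s : ℝ) :
    (1 + ‖x + y‖) ^ s ≤ (1 + ‖x‖) ^ |s| * (1 + ‖y‖) ^ s := by
  have peetre (x y : E) : 1 + ‖x + y‖ ≤ (1 + ‖x‖) * (1 + ‖y‖) := by
    nlinarith [norm_add_le x y, norm_nonneg x, norm_nonneg y]
  rcases le_total 0 s with hs | hs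
  · rw [abs_of_nonneg hs, ← Real.mul_rpow (by positivity) (by positivity)]
    exact Real.rpow_le_rpow (by positivity) (peetre x y) hs
  · rw [abs_of_nonpos hs, Real.rpow_neg (by positivity), ← div_eq_inv_mul,
      ← Real.div_rpow (by positivity) (by positivity)]
    refine Real.rpow_le_rpow_of_nonpos (by positivity) ?_ hs
    rw [div_le_iff₀' (by positivity)]
    simpa using peetre (-x) (x + y)

lemma one_add_norm_pow_le (k : ℕ) (ζ : Fin d → ℝ) :
    (1 + ‖ζ‖) ^ k ≤ 2 ^ k * (1 + ∑ j, |ζ j| ^ k) := by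
  have hmax : ‖ζ‖ ^ k ≤ 1 + ∑ j, |ζ j| ^ k := by
    rcases isEmpty_or_nonempty (Fin d) with _ | _
    · simpa [Subsingleton.elim ζ 0] using pow_le_one₀ le_rfl zero_le_one
    · obtain ⟨j, hj⟩ := Finite.exists_max fun j => |ζ j|
      calc ‖ζ‖ ^ k ≤ |ζ j| ^ k := by gcongr; exact (pi_norm_le_iff_of_nonneg (by positivity)).2 hj
        _ ≤ ∑ j, |ζ j| ^ k := Finset.single_le_sum (f := fun j => |ζ j| ^ k)
          (fun j _ => by positivity) (Finset.mem_univ j)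
        _ ≤ 1 + ∑ j, |ζ j| ^ k := by simp
  have hsum : 0 ≤ ∑ j, |ζ j| ^ k := by positivity
  calc (1 + ‖ζ‖) ^ k ≤ (2 * max 1 ‖ζ‖) ^ k := by
        gcongr
        linarith [le_max_left 1 ‖ζ‖, le_max_right 1 ‖ζ‖]
    _ = 2 ^ k * max 1 (‖ζ‖ ^ k) := by
        rw [mul_pow, (pow_left_monotoneOn (n := k)).map_max (by simp) (by simp), one_pow]
    _ ≤ 2 ^ k * (1 + ∑ j, |ζ j| ^ k) := by
        gcongr
        exact max_le (by linarith) hmax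

/-- The family `g ζ` of functions on phase space grows, uniformly for `x ∈ K`, at most like the
power `s` of `ζ` and like some unspecified power of `ξ`. -/
def PolyBoundedOn {G : Type*} [NormedAddCommGroup G] (K : Set (Fin d → ℝ)) (s : ℝ)
    (g : (Fin d → ℝ) → PhaseSpace d → G) : Prop :=
  ∃ C M : ℝ, 0 ≤ C ∧ ∀ ζ q, q.1 ∈ K → ‖g ζ q‖ ≤ C * ((1 + ‖q.2‖) ^ M * (1 + ‖ζ‖) ^ s)

namespace PolyBoundedOn

variable {G G' : Type*} [NormedAddCommGroup G] [NormedAddCommGroup G']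
  {g g' : (Fin d → ℝ) → PhaseSpace d → G}

lemma of_norm_le {g' : (Fin d → ℝ) → PhaseSpace d → G'} (hg : PolyBoundedOn K s g)
    (hle : ∀ ζ q, q.1 ∈ K → ‖g' ζ q‖ ≤ ‖g ζ q‖) : PolyBoundedOn K s g' := by
  obtain ⟨C, M, hC, h⟩ := hg
  exact ⟨C, M, hC, fun ζ q hq => (hle ζ q hq).trans (h ζ q hq)⟩

lemma mono (hg : PolyBoundedOn K s g) (hst : s ≤ t) : PolyBoundedOn K t g := by
  obtain ⟨C, M, hC, h⟩ := hg
  refine ⟨C, M, hC, fun ζ q hq => (h ζ q hq).trans ?_⟩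
  gcongr
  exact one_le_one_add_norm ζ

lemma zero : PolyBoundedOn K s fun _ _ => (0 : G) :=
  ⟨0, 0, le_rfl, fun _ _ _ => by simp⟩

lemma add (hg : PolyBoundedOn K s g) (hg' : PolyBoundedOn K s g') :
    PolyBoundedOn K s fun ζ q => g ζ q + g' ζ q := by
  obtain ⟨C, M, hC, h⟩ := hg
  obtain ⟨C', M', hC', h'⟩ := hg'
  refine ⟨C + C', max M M', by positivity, fun ζ q hq => ?_⟩
  have hξ := one_le_one_add_norm q.2
  calc ‖g ζ q + g' ζ q‖
      ≤ C * ((1 + ‖q.2‖) ^ M * (1 + ‖ζ‖) ^ s) + C' * ((1 + ‖q.2‖) ^ M' * (1 + ‖ζ‖) ^ s) :=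
        norm_add_le_of_le (h ζ q hq) (h' ζ q hq)
    _ ≤ C * ((1 + ‖q.2‖) ^ max M M' * (1 + ‖ζ‖) ^ s) +
        C' * ((1 + ‖q.2‖) ^ max M M' * (1 + ‖ζ‖) ^ s) := by
        gcongr
        · exact le_max_left M M'
        · exact le_max_right M M'
    _ = _ := by ring

lemma sum {ι : Type*} (u : Finset ι) {g : ι → (Fin d → ℝ) → PhaseSpace d → G}
    (hg : ∀ i ∈ u, PolyBoundedOn K s (g i)) : PolyBoundedOn K s fun ζ q => ∑ i ∈ u, g i ζ q := by
  classical
  induction u using Finset.induction_on with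
  | empty => simpa using zero
  | insert i u hi ih =>
    simp only [Finset.sum_insert hi]
    exact (hg i (u.mem_insert_self i)).add (ih fun j hj => hg j (Finset.mem_insert_of_mem hj))

lemma mul {R : Type*} [NormedRing R] {f g : (Fin d → ℝ) → PhaseSpace d → R}
    (hf : PolyBoundedOn K s f) (hg : PolyBoundedOn K t g) :
    PolyBoundedOn K (s + t) fun ζ q => f ζ q * g ζ q := by
  obtain ⟨C, M, hC, h⟩ := hf
  obtain ⟨C', M', hC', h'⟩ := hg
  refine ⟨C * C', M + M', by positivity, fun ζ q hq => ?_⟩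
  refine (norm_mul_le_of_le (h ζ q hq) (h' ζ q hq)).trans_eq ?_
  rw [Real.rpow_add (by positivity), Real.rpow_add (by positivity)]
  ring

lemma const (c : G) : PolyBoundedOn K 0 fun _ _ => c :=
  ⟨‖c‖, 0, norm_nonneg c, fun _ _ _ => by simp⟩

lemma coord (j : Fin d) : PolyBoundedOn K 1 fun ζ _ => (ζ j : ℂ) := by
  refine ⟨1, 0, zero_le_one, fun ζ q _ => ?_⟩
  have := norm_le_pi_norm ζ j
  simp only [Complex.norm_real, Real.rpow_zero, Real.rpow_one]
  linarith

lemma of_coord_pow_mul {k : ℕ} (hg : PolyBoundedOn K s g)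
    (hcoord : ∀ j, PolyBoundedOn K s fun ζ q => |ζ j| ^ k * ‖g ζ q‖) :
    PolyBoundedOn K (s - k) g := by
  have weight : PolyBoundedOn K (-k) fun (ζ : Fin d → ℝ) _ => (1 + ‖ζ‖) ^ (-k : ℝ) :=
    ⟨1, 0, zero_le_one, fun ζ _ _ => by simp [abs_of_nonneg, add_nonneg]⟩
  have total : PolyBoundedOn K s fun ζ q => 2 ^ k * (‖g ζ q‖ + ∑ j, |ζ j| ^ k * ‖g ζ q‖) := by
    simpa only [zero_add] using (const ((2 : ℝ) ^ k)).mul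
      ((hg.of_norm_le (g' := fun ζ q => ‖g ζ q‖) (by simp)).add (sum _ fun j _ => hcoord j))
  refine neg_add_eq_sub (k : ℝ) s ▸ (weight.mul total).of_norm_le fun ζ q _ => ?_
  have hpow := one_add_norm_pow_le k ζ
  rw [Real.norm_of_nonneg (by positivity), Real.rpow_neg (by positivity), Real.rpow_natCast,
    ← div_eq_inv_mul, le_div_iff₀ (by positivity), ← Finset.sum_mul, ← one_add_mul, ← mul_assoc,
    mul_comm]
  gcongr

end PolyBoundedOn

/-- All phase space derivatives of the functions `f ζ` are polynomially bounded on `K`, where the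
power of `ζ` starts at `A` and increases by `r` with each `ξ`-derivative and by `δ` with each
`x`-derivative. -/
def SymbolBoundsOn {G : Type*} [NormedAddCommGroup G] [NormedSpace ℝ G] (K : Set (Fin d → ℝ))
    (A r δ : ℝ) (f : (Fin d → ℝ) → PhaseSpace d → G) : Prop :=
  ∀ w, PolyBoundedOn K (A + wordCost r δ w) fun ζ => wordDeriv w (f ζ)

namespace SymbolBoundsOn

variable {A B r r' δ δ' : ℝ} {G : Type*} [NormedAddCommGroup G] [NormedSpace ℝ G]

lemma mono {f : (Fin d → ℝ) → PhaseSpace d → G} (hf : SymbolBoundsOn K A r δ f)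
    (hA : A ≤ B) (hr : r ≤ r') (hδ : δ ≤ δ') : SymbolBoundsOn K B r' δ' f :=
  fun w => (hf w).mono (add_le_add hA (wordCost_mono hr hδ w))

lemma dirDeriv_basis {f : (Fin d → ℝ) → PhaseSpace d → G} (hf : SymbolBoundsOn K A r δ f)
    (i : Fin d ⊕ Fin d) :
    SymbolBoundsOn K (A + wordCost r δ [i]) r δ fun ζ => dirDeriv (phaseBasis d i) (f ζ) := by
  intro w
  rw [add_assoc, ← wordCost_append, wordCost_perm r δ List.perm_append_comm]
  simpa only [wordDeriv_append_singleton] using hf (w ++ [i])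

lemma const_mul {f : (Fin d → ℝ) → PhaseSpace d → ℂ} (hf : SymbolBoundsOn K A r δ f)
    (hsmooth : ∀ ζ, ContDiff ℝ ∞ (f ζ)) {c : (Fin d → ℝ) → ℂ}
    (hc : PolyBoundedOn K s fun ζ _ => c ζ) :
    SymbolBoundsOn K (s + A) r δ fun ζ q => c ζ * f ζ q := by
  intro w
  have (ζ : Fin d → ℝ) : wordDeriv w (fun q => c ζ * f ζ q) = fun q => c ζ * wordDeriv w (f ζ) q :=
    dirDerivList_clm_comp (hsmooth ζ) (ContinuousLinearMap.mul ℝ ℂ (c ζ)) _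
  simpa only [this, add_assoc] using hc.mul (hf w)

lemma mul {f g : (Fin d → ℝ) → PhaseSpace d → ℂ} (hf : SymbolBoundsOn K A r δ f)
    (hg : SymbolBoundsOn K B r δ g) (hfs : ∀ ζ, ContDiff ℝ ∞ (f ζ))
    (hgs : ∀ ζ, ContDiff ℝ ∞ (g ζ)) : SymbolBoundsOn K (A + B) r δ fun ζ q => f ζ q * g ζ q := by
  intro w
  induction w using List.reverseRecOn generalizing f g A B with
  | nil => simpa [wordCost, wordDeriv, dirDerivList] using (hf []).mul (hg [])
  | append_singleton w i ih =>
    have hf' (ζ : Fin d → ℝ) := contDiff_dirDeriv (hfs ζ) (phaseBasis d i)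
    have hg' (ζ : Fin d → ℝ) := contDiff_dirDeriv (hgs ζ) (phaseBasis d i)
    have leibniz (ζ : Fin d → ℝ) : wordDeriv (w ++ [i]) (fun q => f ζ q * g ζ q) = fun q =>
        wordDeriv w (fun q => f ζ q * dirDeriv (phaseBasis d i) (g ζ) q) q +
          wordDeriv w (fun q => dirDeriv (phaseBasis d i) (f ζ) q * g ζ q) q := by
      rw [wordDeriv_append_singleton,
        dirDeriv_mul ((hfs ζ).differentiable (by simp)) ((hgs ζ).differentiable (by simp))]
      exact dirDerivList_add ((hfs ζ).mul (hg' ζ)) ((hf' ζ).mul (hgs ζ)) _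
    simp only [leibniz, wordCost_append]
    refine .add ?_ ?_
    · convert ih hf (hg.dirDeriv_basis i) hfs hg' using 1
      ring
    · convert ih (hf.dirDeriv_basis i) hg hf' hgs using 1
      ring

end SymbolBoundsOn

end PolynomialGrowth

section Symbols

variable {d : ℕ} {m ρ δ : ℝ} {a : (Fin d → ℝ) → (Fin d → ℝ) → ℂ} {K : Set (Fin d → ℝ)}

namespace IsSymbol

protected lemma contDiff (ha : IsSymbol Set.univ m ρ δ a) :
    ContDiff ℝ ∞ fun q : PhaseSpace d => a q.1 q.2 :=
  contDiffOn_univ.1 (by simpa only [Set.univ_prod_univ] using ha.1)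

lemma exists_norm_wordDeriv_le (ha : IsSymbol Set.univ m ρ δ a) (hK : IsCompact K)
    (w : List (Fin d ⊕ Fin d)) :
    ∃ C, 0 ≤ C ∧ ∀ q : PhaseSpace d, q.1 ∈ K →
      ‖wordDeriv w (fun q => a q.1 q.2) q‖ ≤ C * (1 + ‖q.2‖) ^ (m + wordCost (-ρ) δ w) := by
  obtain ⟨α, β, hw⟩ := exists_perm_mixedWord w
  obtain ⟨C, hC⟩ := ha.2 α β K hK (Set.subset_univ K)
  refine ⟨max C 0, le_max_right _ _, fun q hq => ?_⟩
  calc ‖wordDeriv w (fun q => a q.1 q.2) q‖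
      = ‖mpderiv β (fun y => mpderiv α (fun η => a y η) q.2) q.1‖ := by
        rw [mpderiv_mpderiv_eq_wordDeriv ha.contDiff, wordDeriv, wordDeriv,
          dirDerivList_perm ha.contDiff (hw.map _)]
    _ ≤ C * (1 + ‖q.2‖) ^ (m - ρ * mOrder α + δ * mOrder β) := hC q.1 hq q.2
    _ ≤ max C 0 * (1 + ‖q.2‖) ^ (m - ρ * mOrder α + δ * mOrder β) := by
        gcongr
        exact le_max_left C 0
    _ = _ := by
        rw [wordCost_perm _ _ hw, wordCost_mixedWord]
        ring_nf

lemma symbolBoundsOn (ha : IsSymbol Set.univ m ρ δ a) (hK : IsCompact K) :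
    SymbolBoundsOn K 0 0 0 fun _ q => a q.1 q.2 := by
  intro w
  obtain ⟨C, hC, hle⟩ := ha.exists_norm_wordDeriv_le hK w
  exact ⟨C, _, hC, fun ζ q hq => by simpa [wordCost] using hle q hq⟩

lemma contDiff_conj (ha : IsSymbol Set.univ m ρ δ a) :
    ContDiff ℝ ∞ fun q : PhaseSpace d => starRingEnd ℂ (a q.1 q.2) :=
  Complex.conjCLE.contDiff.comp ha.contDiff

lemma symbolBoundsOn_conj_shift (ha : IsSymbol Set.univ m ρ δ a) (hK : IsCompact K) :
    SymbolBoundsOn K m (-ρ) δ fun ζ q => starRingEnd ℂ (a q.1 (q.2 + ζ)) := by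
  intro w
  obtain ⟨C, hC, hle⟩ := ha.exists_norm_wordDeriv_le hK w
  have hconj : wordDeriv w (fun q => starRingEnd ℂ (a q.1 q.2)) =
      fun q => starRingEnd ℂ (wordDeriv w (fun q => a q.1 q.2) q) :=
    dirDerivList_clm_comp ha.contDiff (Complex.conjCLE : ℂ →L[ℝ] ℂ) _
  have hshift (ζ : Fin d → ℝ) : wordDeriv w (fun q => starRingEnd ℂ (a q.1 (q.2 + ζ))) =
      fun q => wordDeriv w (fun q => starRingEnd ℂ (a q.1 q.2)) (q.1, q.2 + ζ) := by
    simpa [wordDeriv, Prod.add_def, add_comm] using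
      dirDerivList_comp_affine ha.contDiff_conj (.id ℝ (PhaseSpace d)) (0, ζ)
        (w.map (phaseBasis d))
  refine ⟨C, |m + wordCost (-ρ) δ w|, hC, fun ζ q hq => ?_⟩
  simp only [hshift, hconj, RCLike.norm_conj]
  refine (hle (q.1, q.2 + ζ) hq).trans ?_
  gcongr
  exact one_add_norm_add_rpow_le q.2 ζ _

end IsSymbol

end Symbols

section Amplitudes

variable {d : ℕ} {δ : ℝ} {K : Set (Fin d → ℝ)} {f : (Fin d → ℝ) → PhaseSpace d → ℂ}

/-- Amplitudes of oscillatory integrals: smooth families `f ζ` of functions of `(y, ξ)`, supported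
in `y ∈ K`, whose derivatives are polynomially bounded, with a loss of at most `δ` powers of `ζ`
for each `y`-derivative; the order in `ζ` and its loss under `ξ`-derivatives are arbitrary. -/
structure IsOscAmplitude (K : Set (Fin d → ℝ)) (δ : ℝ) (f : (Fin d → ℝ) → PhaseSpace d → ℂ) :
    Prop where
  contDiff : ContDiff ℝ ∞ fun p : (Fin d → ℝ) × PhaseSpace d => f p.1 p.2
  eq_zero : ∀ ζ q, q.1 ∉ K → f ζ q = 0
  exists_symbolBoundsOn : ∃ A r, SymbolBoundsOn K A r δ f

/-- The amplitude of the `i`-th partial derivative of an oscillatory integral with amplitude `f`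
and phase factor `exp (i ⟨x - y, ζ⟩)`. -/
noncomputable def ampDeriv (i : Fin d ⊕ Fin d) (f : (Fin d → ℝ) → PhaseSpace d → ℂ) :
    (Fin d → ℝ) → PhaseSpace d → ℂ :=
  match i with
  | .inl j => fun ζ q => Complex.I * ζ j * f ζ q
  | .inr j => fun ζ => dirDeriv (phaseBasis d (.inr j)) (f ζ)

namespace IsOscAmplitude

lemma contDiff_slice (hf : IsOscAmplitude K δ f) (ζ : Fin d → ℝ) : ContDiff ℝ ∞ (f ζ) :=
  hf.contDiff.comp (contDiff_prodMk_right ζ)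

lemma dirDeriv_basis (hK : IsClosed K) (hf : IsOscAmplitude K δ f) (i : Fin d ⊕ Fin d) :
    IsOscAmplitude K δ fun ζ => dirDeriv (phaseBasis d i) (f ζ) where
  contDiff := by
    have partial_eq (p : (Fin d → ℝ) × PhaseSpace d) : dirDeriv (phaseBasis d i) (f p.1) p.2 =
        dirDeriv (0, phaseBasis d i) (fun p : (Fin d → ℝ) × PhaseSpace d => f p.1 p.2) p := by
      simpa using congrFun (dirDeriv_comp_affine (hf.contDiff.differentiable (by simp))
        (.inr ℝ (Fin d → ℝ) (PhaseSpace d)) (p.1, 0) (phaseBasis d i)) p.2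
    simpa only [partial_eq] using contDiff_dirDeriv hf.contDiff (0, phaseBasis d i)
  eq_zero ζ q hq := dirDerivList_eq_zero_of_isOpen (U := {q : PhaseSpace d | q.1 ∉ K})
    (hK.isOpen_compl.preimage continuous_fst) (fun q hq => hf.eq_zero ζ q hq) [_] hq
  exists_symbolBoundsOn := by
    obtain ⟨A, r, h⟩ := hf.exists_symbolBoundsOn
    exact ⟨_, r, h.dirDeriv_basis i⟩

protected lemma wordDeriv (hK : IsClosed K) (hf : IsOscAmplitude K δ f) (w : List (Fin d ⊕ Fin d)) :
    IsOscAmplitude K δ fun ζ => wordDeriv w (f ζ) := by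
  induction w with
  | nil => exact hf
  | cons i w ih => exact ih.dirDeriv_basis hK i

lemma coord_mul (hf : IsOscAmplitude K δ f) (j : Fin d) :
    IsOscAmplitude K δ fun ζ q => Complex.I * ζ j * f ζ q where
  contDiff := by
    have hcoord : ContDiff ℝ ∞ fun p : (Fin d → ℝ) × PhaseSpace d => (p.1 j : ℂ) :=
      Complex.ofRealCLM.contDiff.comp ((contDiff_apply ℝ ℝ j).comp contDiff_fst)
    exact (contDiff_const.mul hcoord).mul hf.contDiff
  eq_zero ζ q hq := by simp [hf.eq_zero ζ q hq]
  exists_symbolBoundsOn := by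
    obtain ⟨A, r, h⟩ := hf.exists_symbolBoundsOn
    exact ⟨_, r, h.const_mul hf.contDiff_slice ((PolyBoundedOn.const Complex.I).mul (.coord j))⟩

lemma foldr_ampDeriv (hK : IsClosed K) (hf : IsOscAmplitude K δ f) (w : List (Fin d ⊕ Fin d)) :
    IsOscAmplitude K δ (w.foldr ampDeriv f) := by
  induction w with
  | nil => exact hf
  | cons i w ih =>
    cases i with
    | inl j => exact ih.coord_mul j
    | inr j => exact ih.dirDeriv_basis hK (.inr j)

lemma exists_polyBoundedOn (hf : IsOscAmplitude K δ f) : ∃ s, PolyBoundedOn K s f := by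
  obtain ⟨A, r, h⟩ := hf.exists_symbolBoundsOn
  exact ⟨_, h []⟩

end IsOscAmplitude

end Amplitudes

section OscillatoryIntegrals

variable {d : ℕ}

lemma continuous_dotp : Continuous fun p : (Fin d → ℝ) × (Fin d → ℝ) => dotp p.1 p.2 := by
  unfold dotp
  fun_prop

lemma dotp_single (j : Fin d) (ζ : Fin d → ℝ) : dotp (Pi.single j 1) ζ = ζ j := by
  simp [dotp, Pi.single_apply]

lemma integrable_indicator_one_of_isCompact {X : Type*} [TopologicalSpace X] [T2Space X]
    [MeasurableSpace X] [OpensMeasurableSpace X] {μ : Measure X} [IsFiniteMeasureOnCompacts μ]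
    {K : Set X} (hK : IsCompact K) : Integrable (K.indicator (1 : X → ℝ)) μ :=
  (integrable_indicator_iff hK.measurableSet).2 (integrableOn_const hK.measure_lt_top.ne)

lemma integrable_one_add_norm_rpow :
    Integrable fun ζ : Fin d → ℝ => (1 + ‖ζ‖) ^ (-(d + 1) : ℝ) :=
  integrable_one_add_norm (by simp)

/-- The plane wave `x ↦ exp (i ⟨x, ζ⟩)`. -/
noncomputable def planeWave (ζ x : Fin d → ℝ) : ℂ := Complex.exp (Complex.I * (dotp x ζ : ℂ))

lemma contDiff_planeWave (ζ : Fin d → ℝ) : ContDiff ℝ ∞ (planeWave ζ) := by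
  have hdotp : ContDiff ℝ ∞ fun x => dotp x ζ := by
    unfold dotp
    fun_prop
  exact (contDiff_const.mul (Complex.ofRealCLM.contDiff.comp hdotp)).cexp

lemma continuous_planeWave : Continuous fun p : (Fin d → ℝ) × (Fin d → ℝ) => planeWave p.1 p.2 :=
  Complex.continuous_exp.comp <| continuous_const.mul <|
    Complex.continuous_ofReal.comp (continuous_dotp.comp continuous_swap)

lemma norm_planeWave (ζ x : Fin d → ℝ) : ‖planeWave ζ x‖ = 1 := by
  rw [planeWave, mul_comm, Complex.norm_exp_ofReal_mul_I]

lemma dirDeriv_planeWave (ζ v : Fin d → ℝ) :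
    dirDeriv v (planeWave ζ) = fun x => Complex.I * dotp v ζ * planeWave ζ x := by
  funext x
  let L : (Fin d → ℝ) →L[ℝ] ℂ := Complex.ofRealCLM.comp
    (∑ j, ζ j • ContinuousLinearMap.proj j)
  have hL (x : Fin d → ℝ) : L x = dotp x ζ := by
    simp [L, dotp, mul_comm]
  have hd : HasFDerivAt (planeWave ζ) _ x :=
    ((L.hasFDerivAt (x := x)).const_mul Complex.I).cexp.congr_of_eventuallyEq
      (.of_forall fun x => by simp [planeWave, hL])
  rw [dirDeriv, hd.fderiv]
  simp [planeWave, hL, mul_comm]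

lemma dirDeriv_planeWave_const_sub (ζ v x : Fin d → ℝ) :
    dirDeriv v (fun y => planeWave ζ (x - y)) =
      fun y => -(Complex.I * dotp v ζ) * planeWave ζ (x - y) := by
  have := dirDeriv_comp_affine ((contDiff_planeWave ζ).differentiable (by simp))
    (-.id ℝ (Fin d → ℝ)) x v
  simpa [dirDeriv_planeWave, dotp, ← sub_eq_add_neg] using this

/-- The integrand `f ζ (y, ξ) exp (i ⟨x - y, ζ⟩)` of the oscillatory integral with amplitude `f`,
where `q = (x, ξ)`. -/
noncomputable def oscIntegrand (f : (Fin d → ℝ) → PhaseSpace d → ℂ) (ζ : Fin d → ℝ)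
    (q : PhaseSpace d) (y : Fin d → ℝ) : ℂ :=
  f ζ (y, q.2) * planeWave ζ (q.1 - y)

/-- The inner integral, over `y`, of the oscillatory integral with amplitude `f`. -/
noncomputable def oscInner (f : (Fin d → ℝ) → PhaseSpace d → ℂ) (ζ : Fin d → ℝ)
    (q : PhaseSpace d) : ℂ :=
  ∫ y, oscIntegrand f ζ q y

/-- The oscillatory integral with amplitude `f`, as an iterated integral over `y`, then `ζ`. -/
noncomputable def oscIntegral (f : (Fin d → ℝ) → PhaseSpace d → ℂ) (q : PhaseSpace d) : ℂ :=
  ∫ ζ, oscInner f ζ q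

variable {K : Set (Fin d → ℝ)} {δ s : ℝ} {f : (Fin d → ℝ) → PhaseSpace d → ℂ}

namespace IsOscAmplitude

section Integrand

lemma contDiff_oscIntegrand (hf : IsOscAmplitude K δ f) (ζ y : Fin d → ℝ) :
    ContDiff ℝ ∞ fun q => oscIntegrand f ζ q y :=
  ((hf.contDiff_slice ζ).comp (contDiff_const.prodMk contDiff_snd)).mul
    ((contDiff_planeWave ζ).comp (contDiff_fst.sub contDiff_const))

lemma continuous_oscIntegrand (hf : IsOscAmplitude K δ f) :
    Continuous fun p : ((Fin d → ℝ) × PhaseSpace d) × (Fin d → ℝ) =>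
      oscIntegrand f p.1.1 p.1.2 p.2 := by
  have hamp : Continuous fun p : ((Fin d → ℝ) × PhaseSpace d) × (Fin d → ℝ) =>
      f p.1.1 (p.2, p.1.2.2) :=
    hf.contDiff.continuous.comp
      (f := fun p : ((Fin d → ℝ) × PhaseSpace d) × (Fin d → ℝ) => (p.1.1, (p.2, p.1.2.2)))
      (by fun_prop)
  have hwave : Continuous fun p : ((Fin d → ℝ) × PhaseSpace d) × (Fin d → ℝ) =>
      planeWave p.1.1 (p.1.2.1 - p.2) :=
    continuous_planeWave.comp
      (f := fun p : ((Fin d → ℝ) × PhaseSpace d) × (Fin d → ℝ) => (p.1.1, p.1.2.1 - p.2))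
      (by fun_prop)
  exact hamp.mul hwave

lemma dirDeriv_oscIntegrand (hf : IsOscAmplitude K δ f) (i : Fin d ⊕ Fin d) (ζ y : Fin d → ℝ) :
    dirDeriv (phaseBasis d i) (fun q => oscIntegrand f ζ q y) =
      fun q => oscIntegrand (ampDeriv i f) ζ q y := by
  have hsmooth := (hf.contDiff_slice ζ).differentiable (by simp)
  have hfreeze (q : PhaseSpace d) : (y, q.2) = ((y, 0) : PhaseSpace d) +
      (ContinuousLinearMap.inr ℝ _ _ ∘L .snd ℝ (Fin d → ℝ) (Fin d → ℝ)) q := by simp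
  have hamp : dirDeriv (phaseBasis d i) (fun q => f ζ (y, q.2)) =
      fun q => dirDeriv (0, (phaseBasis d i).2) (f ζ) (y, q.2) := by
    simp only [hfreeze]
    exact dirDeriv_comp_affine hsmooth _ _ _
  have hwave : dirDeriv (phaseBasis d i) (fun q => planeWave ζ (q.1 - y)) =
      fun q => Complex.I * dotp (phaseBasis d i).1 ζ * planeWave ζ (q.1 - y) := by
    have := dirDeriv_comp_affine ((contDiff_planeWave ζ).differentiable (by simp))
      (.fst ℝ (Fin d → ℝ) (Fin d → ℝ)) (-y) (phaseBasis d i)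
    simpa [dirDeriv_planeWave, neg_add_eq_sub] using this
  unfold oscIntegrand
  rw [dirDeriv_mul, hamp, hwave]
  · funext q
    cases i with
    | inl j =>
      simp [ampDeriv, dotp_single, Prod.mk_zero_zero, dirDeriv_zero, mul_left_comm, mul_assoc]
    | inr j => simp [ampDeriv, dotp]
  · exact hsmooth.comp (by fun_prop)
  · exact ((contDiff_planeWave ζ).differentiable (by simp)).comp (by fun_prop)

lemma wordDeriv_oscIntegrand (hK : IsClosed K) (hf : IsOscAmplitude K δ f)
    (w : List (Fin d ⊕ Fin d)) (ζ y : Fin d → ℝ) :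
    wordDeriv w (fun q => oscIntegrand f ζ q y) =
      fun q => oscIntegrand (w.foldr ampDeriv f) ζ q y := by
  induction w with
  | nil => rfl
  | cons i w ih => rw [wordDeriv_cons, ih, (hf.foldr_ampDeriv hK w).dirDeriv_oscIntegrand,
      List.foldr_cons]

lemma norm_oscIntegrand_le (hf : IsOscAmplitude K δ f) {c : ℝ} {ζ : Fin d → ℝ} {q : PhaseSpace d}
    (hle : ∀ y ∈ K, ‖f ζ (y, q.2)‖ ≤ c) (y : Fin d → ℝ) :
    ‖oscIntegrand f ζ q y‖ ≤ c * K.indicator 1 y := by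
  rw [oscIntegrand, norm_mul, norm_planeWave, mul_one]
  by_cases hy : y ∈ K
  · simpa [hy] using hle y hy
  · simp [hy, hf.eq_zero ζ (y, q.2) hy]

end Integrand

section Inner

lemma locallyDominated_oscIntegrand (hK : IsCompact K) (hf : IsOscAmplitude K δ f) (ζ : Fin d → ℝ) :
    LocallyDominated volume fun q y => oscIntegrand f ζ q y := by
  obtain ⟨s, C, M, -, hle⟩ := hf.exists_polyBoundedOn
  have hcont : Continuous fun q : PhaseSpace d => C * ((1 + ‖q.2‖) ^ M * (1 + ‖ζ‖) ^ s) :=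
    continuous_const.mul <| (Continuous.rpow_const (by fun_prop)
      fun q => .inl (by positivity)).mul continuous_const
  refine .of_norm_le_mul (fun q => ?_) hcont (integrable_indicator_one_of_isCompact hK) fun q y =>
    hf.norm_oscIntegrand_le (fun y hy => hle ζ (y, q.2) hy) y
  exact (hf.continuous_oscIntegrand.comp
    (f := fun y => ((ζ, q), y)) (by fun_prop)).aestronglyMeasurable

lemma locallyDominated_wordDeriv_oscIntegrand (hK : IsCompact K) (hf : IsOscAmplitude K δ f)
    (ζ : Fin d → ℝ) (w : List (Fin d ⊕ Fin d)) :
    LocallyDominated volume fun q y => wordDeriv w (fun p => oscIntegrand f ζ p y) q := by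
  simpa only [hf.wordDeriv_oscIntegrand hK.isClosed] using
    (hf.foldr_ampDeriv hK.isClosed w).locallyDominated_oscIntegrand hK ζ

lemma contDiff_oscInner (hK : IsCompact K) (hf : IsOscAmplitude K δ f) (ζ : Fin d → ℝ) :
    ContDiff ℝ ∞ (oscInner f ζ) :=
  contDiff_integral_of_locallyDominated (phaseBasis d) (fun y => hf.contDiff_oscIntegrand ζ y)
    (hf.locallyDominated_wordDeriv_oscIntegrand hK ζ)

lemma wordDeriv_oscInner (hK : IsCompact K) (hf : IsOscAmplitude K δ f) (ζ : Fin d → ℝ)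
    (w : List (Fin d ⊕ Fin d)) :
    wordDeriv w (oscInner f ζ) = oscInner (w.foldr ampDeriv f) ζ := by
  have := dirDerivList_integral (phaseBasis d) (fun y => hf.contDiff_oscIntegrand ζ y)
    (hf.locallyDominated_wordDeriv_oscIntegrand hK ζ) w
  refine this.trans (funext fun q => integral_congr_ae <| .of_forall fun y => ?_)
  exact congrFun (hf.wordDeriv_oscIntegrand hK.isClosed w ζ y) q

lemma continuous_oscInner (hK : IsCompact K) (hf : IsOscAmplitude K δ f) :
    Continuous fun p : (Fin d → ℝ) × PhaseSpace d => oscInner f p.1 p.2 := by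
  have hset (p : (Fin d → ℝ) × PhaseSpace d) :
      oscInner f p.1 p.2 = ∫ y in K, oscIntegrand f p.1 p.2 y :=
    (setIntegral_eq_integral_of_forall_compl_eq_zero fun y hy => by
      simp [oscIntegrand, hf.eq_zero p.1 (y, p.2.2) hy]).symm
  simp only [hset]
  exact continuous_parametric_integral_of_continuous hf.continuous_oscIntegrand hK

lemma polyBoundedOn_oscInner (hK : IsCompact K) (hf : IsOscAmplitude K δ f)
    (hbound : PolyBoundedOn K s f) : PolyBoundedOn Set.univ s (oscInner f) := by
  obtain ⟨C, M, hC, hle⟩ := hbound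
  refine ⟨C * volume.real K, M, by positivity, fun ζ q _ => ?_⟩
  calc ‖oscInner f ζ q‖
      ≤ ∫ y, C * ((1 + ‖q.2‖) ^ M * (1 + ‖ζ‖) ^ s) * K.indicator 1 y :=
        norm_integral_le_of_norm_le ((integrable_indicator_one_of_isCompact hK).const_mul _) <|
          .of_forall <| hf.norm_oscIntegrand_le fun y hy => hle ζ (y, q.2) hy
    _ = C * volume.real K * ((1 + ‖q.2‖) ^ M * (1 + ‖ζ‖) ^ s) := by
        rw [integral_const_mul, integral_indicator_one hK.measurableSet]
        ring

lemma oscInner_dirDeriv (hK : IsCompact K) (hf : IsOscAmplitude K δ f) (j : Fin d) (ζ : Fin d → ℝ)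
    (q : PhaseSpace d) :
    oscInner (fun ζ => dirDeriv (phaseBasis d (.inl j)) (f ζ)) ζ q =
      Complex.I * ζ j * oscInner f ζ q := by
  have hamp : ContDiff ℝ ∞ fun y => f ζ (y, q.2) :=
    (hf.contDiff_slice ζ).comp (contDiff_prodMk_left q.2)
  have hwave : ContDiff ℝ ∞ fun y => planeWave ζ (q.1 - y) :=
    (contDiff_planeWave ζ).comp (contDiff_const.sub contDiff_id)
  have hamp' : dirDeriv (Pi.single j 1) (fun y => f ζ (y, q.2)) =
      fun y => dirDeriv (phaseBasis d (.inl j)) (f ζ) (y, q.2) := by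
    simpa using dirDeriv_comp_affine ((hf.contDiff_slice ζ).differentiable (by simp))
      (.inl ℝ (Fin d → ℝ) (Fin d → ℝ)) (0, q.2) (Pi.single j 1)
  have hwave' (y : Fin d → ℝ) : f ζ (y, q.2) *
      dirDeriv (Pi.single j 1) (fun y => planeWave ζ (q.1 - y)) y =
        -(Complex.I * ζ j) * oscIntegrand f ζ q y := by
    rw [dirDeriv_planeWave_const_sub, dotp_single, oscIntegrand, mul_left_comm]
  have hint := (hf.locallyDominated_oscIntegrand hK ζ).integrable q
  have hint' := ((hf.dirDeriv_basis hK.isClosed (.inl j)).locallyDominated_oscIntegrand hK ζ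
    ).integrable q
  have parts := integral_mul_fderiv_eq_neg_fderiv_mul_of_integrable (μ := volume)
    (f := fun y => f ζ (y, q.2)) (g := fun y => planeWave ζ (q.1 - y)) (v := Pi.single j 1)
    (hint'.congr (.of_forall fun y => congrArg (· * _) (congrFun hamp' y).symm))
    ((hint.const_mul _).congr (.of_forall fun y => (hwave' y).symm))
    hint (fun y _ => hamp.differentiable (by simp) y)
    (fun y _ => hwave.differentiable (by simp) y)
  calc oscInner (fun ζ => dirDeriv (phaseBasis d (.inl j)) (f ζ)) ζ q
      = ∫ y, dirDeriv (Pi.single j 1) (fun y => f ζ (y, q.2)) y * planeWave ζ (q.1 - y) := by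
        rw [hamp']
        rfl
    _ = -∫ y, f ζ (y, q.2) * dirDeriv (Pi.single j 1) (fun y => planeWave ζ (q.1 - y)) y :=
        (neg_eq_iff_eq_neg.2 parts).symm
    _ = Complex.I * ζ j * oscInner f ζ q := by
        simp only [hwave']
        rw [integral_const_mul, neg_mul, neg_neg, oscInner]

lemma oscInner_wordDeriv_replicate (hK : IsCompact K) (hf : IsOscAmplitude K δ f) (j : Fin d)
    (k : ℕ) (ζ : Fin d → ℝ) (q : PhaseSpace d) :
    oscInner (fun ζ => wordDeriv (List.replicate k (.inl j)) (f ζ)) ζ q =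
      (Complex.I * ζ j) ^ k * oscInner f ζ q := by
  induction k with
  | zero => simp [wordDeriv, dirDerivList]
  | succ k ih =>
    rw [pow_succ', mul_assoc, ← ih, ← (hf.wordDeriv hK.isClosed _).oscInner_dirDeriv hK]
    rfl

lemma polyBoundedOn_oscInner_neg (hK : IsCompact K) (hδ : δ < 1) (hf : IsOscAmplitude K δ f)
    (N : ℝ) : PolyBoundedOn Set.univ (-N) (oscInner f) := by
  obtain ⟨A, r, hbounds⟩ := hf.exists_symbolBoundsOn
  obtain ⟨k, hk⟩ := exists_nat_ge (max (A + N) ((A + N) / (1 - δ)))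
  have hkA : A ≤ k - N := by linarith [le_max_left (A + N) ((A + N) / (1 - δ))]
  have hkδ : A + k * δ ≤ k - N := by
    have := (div_le_iff₀ (by linarith)).1 ((le_max_right _ _).trans hk)
    linarith
  have hzero : PolyBoundedOn Set.univ (k - N) (oscInner f) :=
    hf.polyBoundedOn_oscInner hK ((hbounds []).mono (by simpa [wordCost] using hkA))
  have hcoord (j : Fin d) :
      PolyBoundedOn Set.univ (k - N) fun ζ q => |ζ j| ^ k * ‖oscInner f ζ q‖ := by
    have hword := (hf.wordDeriv hK.isClosed (List.replicate k (.inl j))).polyBoundedOn_oscInner hK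
      ((hbounds (List.replicate k (.inl j))).mono (by simpa [wordCost] using hkδ))
    refine hword.of_norm_le fun ζ q _ => ?_
    simp [hf.oscInner_wordDeriv_replicate hK]
  simpa using hzero.of_coord_pow_mul hcoord

end Inner

section Outer

lemma exists_norm_oscInner_le (hK : IsCompact K) (hδ : δ < 1) (hf : IsOscAmplitude K δ f) :
    ∃ C M : ℝ, ∀ ζ q, ‖oscInner f ζ q‖ ≤ C * (1 + ‖q.2‖) ^ M * (1 + ‖ζ‖) ^ (-(d + 1) : ℝ) := by
  obtain ⟨C, M, -, hle⟩ := hf.polyBoundedOn_oscInner_neg hK hδ (d + 1)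
  exact ⟨C, M, fun ζ q => (hle ζ q trivial).trans_eq (mul_assoc _ _ _).symm⟩

lemma locallyDominated_oscInner (hK : IsCompact K) (hδ : δ < 1) (hf : IsOscAmplitude K δ f) :
    LocallyDominated volume fun q ζ => oscInner f ζ q := by
  obtain ⟨C, M, hle⟩ := hf.exists_norm_oscInner_le hK hδ
  have hcont : Continuous fun q : PhaseSpace d => C * (1 + ‖q.2‖) ^ M :=
    continuous_const.mul (Continuous.rpow_const (by fun_prop) fun q => .inl (by positivity))
  refine .of_norm_le_mul (fun q => ?_) hcont integrable_one_add_norm_rpow fun q ζ => hle ζ q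
  exact ((hf.continuous_oscInner hK).comp
    (Continuous.prodMk_left q)).aestronglyMeasurable

lemma locallyDominated_wordDeriv_oscInner (hK : IsCompact K) (hδ : δ < 1)
    (hf : IsOscAmplitude K δ f) (w : List (Fin d ⊕ Fin d)) :
    LocallyDominated volume fun q ζ => wordDeriv w (oscInner f ζ) q := by
  simpa only [hf.wordDeriv_oscInner hK] using
    (hf.foldr_ampDeriv hK.isClosed w).locallyDominated_oscInner hK hδ

lemma contDiff_oscIntegral (hK : IsCompact K) (hδ : δ < 1) (hf : IsOscAmplitude K δ f) :
    ContDiff ℝ ∞ (oscIntegral f) :=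
  contDiff_integral_of_locallyDominated (phaseBasis d) (hf.contDiff_oscInner hK)
    (hf.locallyDominated_wordDeriv_oscInner hK hδ)

lemma wordDeriv_oscIntegral (hK : IsCompact K) (hδ : δ < 1) (hf : IsOscAmplitude K δ f)
    (w : List (Fin d ⊕ Fin d)) :
    wordDeriv w (oscIntegral f) = oscIntegral (w.foldr ampDeriv f) := by
  have := dirDerivList_integral (phaseBasis d) (hf.contDiff_oscInner hK)
    (hf.locallyDominated_wordDeriv_oscInner hK hδ) w
  refine this.trans (funext fun q => integral_congr_ae <| .of_forall fun ζ => ?_)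
  exact congrFun (hf.wordDeriv_oscInner hK ζ w) q

lemma exists_norm_oscIntegral_le (hK : IsCompact K) (hδ : δ < 1) (hf : IsOscAmplitude K δ f) :
    ∃ C M : ℝ, ∀ q, ‖oscIntegral f q‖ ≤ C * (1 + ‖q.2‖) ^ M := by
  obtain ⟨C, M, hle⟩ := hf.exists_norm_oscInner_le hK hδ
  refine ⟨C * ∫ ζ : Fin d → ℝ, (1 + ‖ζ‖) ^ (-(d + 1) : ℝ), M, fun q => ?_⟩
  calc ‖oscIntegral f q‖ ≤ ∫ ζ, C * (1 + ‖q.2‖) ^ M * (1 + ‖ζ‖) ^ (-(d + 1) : ℝ) :=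
        norm_integral_le_of_norm_le (integrable_one_add_norm_rpow.const_mul _)
          (.of_forall fun ζ => hle ζ q)
    _ = _ := by
        rw [integral_const_mul]
        ring

lemma exists_norm_wordDeriv_oscIntegral_le (hK : IsCompact K) (hδ : δ < 1)
    (hf : IsOscAmplitude K δ f) (w : List (Fin d ⊕ Fin d)) :
    ∃ C M : ℝ, ∀ q, ‖wordDeriv w (oscIntegral f) q‖ ≤ C * (1 + ‖q.2‖) ^ M := by
  simpa only [hf.wordDeriv_oscIntegral hK hδ] using
    (hf.foldr_ampDeriv hK.isClosed w).exists_norm_oscIntegral_le hK hδ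

end Outer

end IsOscAmplitude

end OscillatoryIntegrals

section Composition

variable {d : ℕ} {ρ₁ δ₁ ρ₂ δ₂ m₁ m₂ : ℝ} {a₁ a₂ : (Fin d → ℝ) → (Fin d → ℝ) → ℂ}
  {K : Set (Fin d → ℝ)}

lemma isOscAmplitude_mul_conj_shift (ha₁ : IsSymbol Set.univ m₁ ρ₁ δ₁ a₁)
    (ha₂ : IsSymbol Set.univ m₂ ρ₂ δ₂ a₂) (hK : IsCompact K)
    (hsupp : ∀ x ∉ K, ∀ ξ η, a₁ x ξ = 0 ∨ a₂ x η = 0) :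
    IsOscAmplitude K (max δ₂ 0) fun ζ q => a₁ q.1 q.2 * starRingEnd ℂ (a₂ q.1 (q.2 + ζ)) := by
  have hsmooth₁ : ContDiff ℝ ∞ fun p : (Fin d → ℝ) × PhaseSpace d => a₁ p.2.1 p.2.2 :=
    ha₁.contDiff.comp contDiff_snd
  have hsmooth₂ : ContDiff ℝ ∞ fun p : (Fin d → ℝ) × PhaseSpace d =>
      starRingEnd ℂ (a₂ p.2.1 (p.2.2 + p.1)) :=
    ha₂.contDiff_conj.comp (f := fun p : (Fin d → ℝ) × PhaseSpace d => (p.2.1, p.2.2 + p.1))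
      (by fun_prop)
  refine ⟨hsmooth₁.mul hsmooth₂, fun ζ q hq => ?_, 0 + m₂, |ρ₂|, ?_⟩
  · rcases hsupp q.1 hq q.2 (q.2 + ζ) with h | h <;> simp [h]
  · exact ((ha₁.symbolBoundsOn hK).mono le_rfl (abs_nonneg ρ₂) (le_max_right δ₂ 0)).mul
      ((ha₂.symbolBoundsOn_conj_shift hK).mono le_rfl (neg_le_abs ρ₂) (le_max_left δ₂ 0))
      (fun ζ => hsmooth₁.comp (contDiff_prodMk_right ζ))
      (fun ζ => hsmooth₂.comp (contDiff_prodMk_right ζ))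

end Composition

theorem statement6_general {d : ℕ} {ρ₁ δ₁ ρ₂ δ₂ m₁ m₂ : ℝ} (hδ₂ : δ₂ < 1)
    {a₁ a₂ : (Fin d → ℝ) → (Fin d → ℝ) → ℂ}
    (ha₁ : IsSymbol Set.univ m₁ ρ₁ δ₁ a₁) (ha₂ : IsSymbol Set.univ m₂ ρ₂ δ₂ a₂)
    {K₀ : Set (Fin d → ℝ)} (hK₀ : IsCompact K₀)
    (hsupp : ∀ x ∉ K₀, ∀ ξ η, a₁ x ξ = 0 ∨ a₂ x η = 0)
    {h : (Fin d → ℝ) → (Fin d → ℝ) → ℂ}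
    (hh : h = fun x ξ => (((2 * Real.pi) ^ (-(d : ℝ)) : ℝ) : ℂ) *
      ∫ ζ : Fin d → ℝ, ∫ y : Fin d → ℝ,
        a₁ y ξ * (starRingEnd ℂ) (a₂ y (ξ + ζ)) *
          Complex.exp (Complex.I * (dotp (x - y) ζ : ℂ))) :
    ContDiff ℝ ∞ (fun q : (Fin d → ℝ) × (Fin d → ℝ) => h q.1 q.2) ∧
    ∀ α β : Fin d → ℕ, ∃ n C : ℝ, ∀ x ξ : Fin d → ℝ,
      ‖mpderiv β (fun y => mpderiv α (fun η => h y η) ξ) x‖ ≤ C * (1 + ‖ξ‖) ^ n := by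
  set c : ℂ := (((2 * Real.pi) ^ (-(d : ℝ)) : ℝ) : ℂ)
  have hf := isOscAmplitude_mul_conj_shift ha₁ ha₂ hK₀ hsupp
  set f : (Fin d → ℝ) → PhaseSpace d → ℂ :=
    fun ζ q => a₁ q.1 q.2 * starRingEnd ℂ (a₂ q.1 (q.2 + ζ))
  have hδ : max δ₂ 0 < 1 := max_lt hδ₂ one_pos
  have hosc : (fun q : PhaseSpace d => h q.1 q.2) = fun q => c * oscIntegral f q := by
    rw [hh]
    rfl
  have hI : ContDiff ℝ ∞ (oscIntegral f) := hf.contDiff_oscIntegral hK₀ hδ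
  have hsmooth : ContDiff ℝ ∞ fun q : PhaseSpace d => h q.1 q.2 := hosc ▸ contDiff_const.mul hI
  refine ⟨hsmooth, fun α β => ?_⟩
  obtain ⟨C, M, hle⟩ := hf.exists_norm_wordDeriv_oscIntegral_le hK₀ hδ (mixedWord α β)
  refine ⟨M, ‖c‖ * C, fun x ξ => ?_⟩
  calc ‖mpderiv β (fun y => mpderiv α (fun η => h y η) ξ) x‖
      = ‖c * wordDeriv (mixedWord α β) (oscIntegral f) (x, ξ)‖ := by
        rw [mpderiv_mpderiv_eq_wordDeriv hsmooth, hosc]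
        exact congrArg _ (congrFun
          (dirDerivList_clm_comp hI (ContinuousLinearMap.mul ℝ ℂ c) _) (x, ξ))
    _ ≤ ‖c‖ * C * (1 + ‖ξ‖) ^ M := by
        rw [norm_mul, mul_assoc]
        gcongr
        exact hle (x, ξ)

/-- Lemma 2.7 / `ha1`: the function
`h(x,ξ) = (2π)^{-d} ∫∫ a₁(y,ξ) conj(a₂(y,ξ+ζ)) e^{i⟨x-y,ζ⟩} dy dζ` is smooth and all its
derivatives are polynomially bounded in `ξ`, uniformly in `x`. -/
theorem statement6 {d : ℕ} (ρ δ m₁ m₂ : ℝ) (hρ : 0 ≤ ρ) (hδ : δ < 1)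
    (a₁ a₂ : (Fin d → ℝ) → (Fin d → ℝ) → ℂ)
    (ha₁ : IsSymbol Set.univ m₁ ρ δ a₁)
    (ha₂ : IsSymbol Set.univ m₂ ρ δ a₂)
    (K₀ : Set (Fin d → ℝ)) (hK₀ : IsCompact K₀)
    (hsupp : ∀ x ∉ K₀, ∀ ξ : Fin d → ℝ, a₁ x ξ = 0 ∧ a₂ x ξ = 0)
    (h : (Fin d → ℝ) → (Fin d → ℝ) → ℂ)
    (hh : h = fun x ξ => (((2 * Real.pi) ^ (-(d : ℝ)) : ℝ) : ℂ) *
      ∫ ζ : Fin d → ℝ, ∫ y : Fin d → ℝ,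
        a₁ y ξ * (starRingEnd ℂ) (a₂ y (ξ + ζ)) *
          Complex.exp (Complex.I * (dotp (x - y) ζ : ℂ))) :
    ContDiff ℝ (⊤ : ℕ∞) (fun q : (Fin d → ℝ) × (Fin d → ℝ) => h q.1 q.2) ∧
    ∀ α β : Fin d → ℕ, ∃ n C : ℝ, ∀ x ξ : Fin d → ℝ,
      ‖mpderiv β (fun y => mpderiv α (fun η => h y η) ξ) x‖ ≤ C * (1 + ‖ξ‖) ^ n :=
  statement6_general hδ ha₁ ha₂ hK₀ (fun x hx ξ _ => .inl (hsupp x hx ξ).1) hh
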